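/- Let f : ℝ^d → ℝ be locally integrable and let C ≥ 0 be such that for every axis-parallel rectangle q' ⊆ [0,1)^d of positive Lebesgue measure, (1/μ(q')) ∫_{q'} |f − ⟨f⟩_{q'}| dμ ≤ C. Let η ∈ (0,1] and let q ⊆ [0,1)^d be an axis-parallel rectangle with μ(q) ≥ η. Then |⟨f⟩_q − ⟨f⟩_{[0,1)^d}| ≤ 2 ⌈log₂(1/η)⌉ C. -/

import Mathlib

open MeasureTheory Set
open scoped ENNReal

/-- The half-open unit cube `[0,1)^d` in `ℝ^d`. -/
def unitCube (d : ℕ) : Set (Fin d → ℝ) := Set.univ.pi fun _ => Set.Ico (0 : ℝ) 1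

/-- An axis-parallel rectangle in `ℝ^d`: a product of (half-open) intervals. -/
def IsRect {d : ℕ} (q : Set (Fin d → ℝ)) : Prop :=
  ∃ a b : Fin d → ℝ, q = Set.univ.pi fun i => Set.Ico (a i) (b i)

/-!
If `s ⊆ t` and `μ t ≤ K μ s`, then averaging over `s` instead of `t` inflates the average of a
nonnegative function by at most `K`; applied to `‖f - ⟨f⟩_t‖`, this bounds `‖⟨f⟩_s - ⟨f⟩_t‖` by
`K` times the mean oscillation of `f` over `t`. Between two nested rectangles `q ⊆ Q` there are
rectangles of every intermediate volume, because the volume depends continuously on the corners.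
So `Q` is reached from `q` by doubling the volume (capped at that of `Q`) `⌈log₂ (1/η)⌉` times,
and each doubling moves the average by at most `2 C`.
-/

section Average

variable {α E : Type*} [MeasurableSpace α] [NormedAddCommGroup E] [NormedSpace ℝ E]
  {μ : Measure α} {s t : Set α} {f : α → E}

lemma setAverage_le_mul_setAverage_of_subset {g : α → ℝ} {K : ℝ} (hst : s ⊆ t)
    (hs₀ : μ s ≠ 0) (ht : μ t ≠ ∞) (hK : μ.real t ≤ K * μ.real s)
    (hg : IntegrableOn g t μ) (hg₀ : 0 ≤ g) :
    ⨍ x in s, g x ∂μ ≤ K * ⨍ x in t, g x ∂μ := by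
  have hs_pos : 0 < μ.real s := ENNReal.toReal_pos hs₀ (measure_ne_top_of_subset hst ht)
  have ht_pos : 0 < μ.real t := hs_pos.trans_le (measureReal_mono hst ht)
  have hnonneg : 0 ≤ ∫ x in t, g x ∂μ := integral_nonneg hg₀
  have hinv : (μ.real s)⁻¹ ≤ K * (μ.real t)⁻¹ := by
    rwa [← div_eq_mul_inv, inv_eq_one_div, div_le_div_iff₀ hs_pos ht_pos, one_mul]
  have hmono : ∫ x in s, g x ∂μ ≤ ∫ x in t, g x ∂μ :=
    setIntegral_mono_set hg (ae_of_all _ hg₀) hst.eventuallyLE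
  rw [setAverage_eq, setAverage_eq, smul_eq_mul, smul_eq_mul]
  calc (μ.real s)⁻¹ * ∫ x in s, g x ∂μ
      ≤ (μ.real s)⁻¹ * ∫ x in t, g x ∂μ := by gcongr
    _ ≤ K * (μ.real t)⁻¹ * ∫ x in t, g x ∂μ := by gcongr
    _ = K * ((μ.real t)⁻¹ * ∫ x in t, g x ∂μ) := mul_assoc _ _ _

lemma norm_setAverage_sub_const_le [CompleteSpace E] (hs₀ : μ s ≠ 0) (hs : μ s ≠ ∞)
    (hf : IntegrableOn f s μ) (c : E) :
    ‖(⨍ x in s, f x ∂μ) - c‖ ≤ ⨍ x in s, ‖f x - c‖ ∂μ := by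
  have haverage : ⨍ x in s, (f x - c) ∂μ = (⨍ x in s, f x ∂μ) - c := by
    rw [average, integral_sub hf.to_average (integrableOn_const hs).to_average]
    exact congrArg _ (setAverage_const hs₀ hs c)
  rw [← haverage]
  exact norm_integral_le_integral_norm _

/-- The mean oscillation `⟨‖f - ⟨f⟩_s‖⟩_s` of `f` over `s`, whose supremum over a family of sets is
the BMO seminorm. It is `0` when `μ s` is `0` or `∞`, by the conventions for averages. -/
noncomputable def meanOscillation (μ : Measure α) (f : α → E) (s : Set α) : ℝ :=
  ⨍ x in s, ‖f x - ⨍ y in s, f y ∂μ‖ ∂μ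

lemma norm_setAverage_sub_setAverage_le_mul_meanOscillation [CompleteSpace E] {K : ℝ}
    (hst : s ⊆ t) (hs₀ : μ s ≠ 0) (ht : μ t ≠ ∞) (hK : μ.real t ≤ K * μ.real s)
    (hf : IntegrableOn f t μ) :
    ‖(⨍ x in s, f x ∂μ) - ⨍ x in t, f x ∂μ‖ ≤ K * meanOscillation μ f t :=
  (norm_setAverage_sub_const_le hs₀ (measure_ne_top_of_subset hst ht) (hf.mono_set hst) _).trans <|
    setAverage_le_mul_setAverage_of_subset hst hs₀ ht hK
      (hf.sub (integrableOn_const ht)).norm fun _ => norm_nonneg _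

end Average

lemma le_pow_natCeil_logb {b x : ℝ} (hb : 1 < b) (hx : 0 < x) : x ≤ b ^ ⌈Real.logb b x⌉₊ := by
  rw [← Real.rpow_natCast, ← Real.logb_le_iff_le_rpow hb hx]
  exact Nat.le_ceil _

section Rect

variable {d : ℕ} {q Q : Set (Fin d → ℝ)}

lemma isRect_unitCube (d : ℕ) : IsRect (unitCube d) :=
  ⟨fun _ => 0, fun _ => 1, rfl⟩

lemma volume_unitCube (d : ℕ) : volume (unitCube d) = 1 := by
  simp [unitCube, Real.volume_pi_Ico]

lemma IsRect.measurableSet (hq : IsRect q) : MeasurableSet q := by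
  obtain ⟨a, b, rfl⟩ := hq
  exact .univ_pi fun _ => measurableSet_Ico

lemma IsRect.subset_isCompact (hq : IsRect q) : ∃ K, IsCompact K ∧ q ⊆ K := by
  obtain ⟨a, b, rfl⟩ := hq
  exact ⟨_, isCompact_univ_pi fun _ => isCompact_Icc, pi_mono fun _ _ => Ico_subset_Icc_self⟩

lemma IsRect.volume_ne_top (hq : IsRect q) : volume q ≠ ∞ := by
  obtain ⟨K, hK, hqK⟩ := hq.subset_isCompact
  exact measure_ne_top_of_subset hqK hK.measure_ne_top

lemma corners_le_of_pi_Ico_subset_pi_Ico {ι : Type*} {a b A B : ι → ℝ}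
    (hne : (univ.pi fun i => Ico (a i) (b i)).Nonempty)
    (hsub : (univ.pi fun i => Ico (a i) (b i)) ⊆ univ.pi fun i => Ico (A i) (B i)) :
    A ≤ a ∧ a ≤ b ∧ b ≤ B := by
  have hab (i) : a i < b i := nonempty_Ico.1 (univ_pi_nonempty_iff.1 hne i)
  have hcorners (i) : A i ≤ a i ∧ b i ≤ B i :=
    (Ico_subset_Ico_iff (hab i)).1 <|
      (pi_subset_pi_iff.1 hsub).resolve_right hne.ne_empty i (mem_univ i)
  exact ⟨fun i => (hcorners i).1, fun i => (hab i).le, fun i => (hcorners i).2⟩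

lemma exists_corners_prod_sub_eq {ι : Type*} [Fintype ι] {a b A B : ι → ℝ}
    (hAa : A ≤ a) (hbB : b ≤ B) {v : ℝ}
    (hv : v ∈ Icc (∏ i, (b i - a i)) (∏ i, (B i - A i))) :
    ∃ a' ∈ Icc A a, ∃ b' ∈ Icc b B, ∏ i, (b' i - a' i) = v := by
  have hconn : IsPreconnected (Icc A a ×ˢ Icc b B) :=
    ((convex_Icc (𝕜 := ℝ) A a).prod (convex_Icc b B)).isPreconnected
  have hcont : Continuous fun p : (ι → ℝ) × (ι → ℝ) => ∏ i, (p.2 i - p.1 i) := by fun_prop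
  obtain ⟨⟨a', b'⟩, ⟨ha', hb'⟩, hprod⟩ :=
    hconn.intermediate_value (a := (a, b)) (b := (A, B))
      ⟨right_mem_Icc.2 hAa, left_mem_Icc.2 hbB⟩ ⟨left_mem_Icc.2 hAa, right_mem_Icc.2 hbB⟩
      hcont.continuousOn hv
  exact ⟨a', ha', b', hb', hprod⟩

lemma IsRect.exists_between_volume_eq (hq : IsRect q) (hQ : IsRect Q) (hqQ : q ⊆ Q)
    (hne : q.Nonempty) {v : ℝ} (hv : v ∈ Icc (volume.real q) (volume.real Q)) :
    ∃ q', IsRect q' ∧ q ⊆ q' ∧ q' ⊆ Q ∧ volume.real q' = v := by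
  obtain ⟨a, b, rfl⟩ := hq
  obtain ⟨A, B, rfl⟩ := hQ
  obtain ⟨hAa, hab, hbB⟩ := corners_le_of_pi_Ico_subset_pi_Ico hne hqQ
  simp only [Measure.real, Real.volume_pi_Ico_toReal hab,
    Real.volume_pi_Ico_toReal (hAa.trans (hab.trans hbB))] at hv
  obtain ⟨a', ⟨hAa', ha'a⟩, b', ⟨hbb', hb'B⟩, hprod⟩ := exists_corners_prod_sub_eq hAa hbB hv
  exact ⟨_, ⟨a', b', rfl⟩, pi_mono fun i _ => Ico_subset_Ico (ha'a i) (hbb' i),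
    pi_mono fun i _ => Ico_subset_Ico (hAa' i) (hb'B i),
    (Real.volume_pi_Ico_toReal (ha'a.trans (hab.trans hbb'))).trans hprod⟩

variable {E : Type*} [NormedAddCommGroup E] [NormedSpace ℝ E] [CompleteSpace E]
  {f : (Fin d → ℝ) → E} {C : ℝ}

theorem IsRect.norm_setAverage_sub_setAverage_le_of_volume_le_two_pow_mul (hQ : IsRect Q)
    (hf : IntegrableOn f Q)
    (hosc : ∀ q', IsRect q' → q' ⊆ Q → 0 < volume q' → meanOscillation volume f q' ≤ C)
    (k : ℕ) (hq : IsRect q) (hqQ : q ⊆ Q) (hq₀ : volume q ≠ 0)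
    (hk : volume.real Q ≤ 2 ^ k * volume.real q) :
    ‖(⨍ x in q, f x) - ⨍ x in Q, f x‖ ≤ 2 * k * C := by
  induction k generalizing q with
  | zero =>
    have hQq : volume Q ≤ volume q :=
      (ENNReal.toReal_le_toReal hQ.volume_ne_top hq.volume_ne_top).1 <| by
        simpa [Measure.real] using hk
    have hae : q =ᵐ[volume] Q :=
      ae_eq_of_subset_of_measure_ge hqQ hQq hq.measurableSet.nullMeasurableSet hQ.volume_ne_top
    simp [setAverage_congr hae]
  | succ k ih =>
    have hq_le_Q : volume.real q ≤ volume.real Q := measureReal_mono hqQ hQ.volume_ne_top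
    have hq_le_two : volume.real q ≤ 2 * volume.real q :=
      le_mul_of_one_le_left measureReal_nonneg one_le_two
    obtain ⟨q', hq', hqq', hq'Q, hvol⟩ := hq.exists_between_volume_eq hQ hqQ
      (nonempty_of_measure_ne_zero hq₀) (v := min (2 * volume.real q) (volume.real Q))
      ⟨le_min hq_le_two hq_le_Q, min_le_right _ _⟩
    have hq'₀ : volume q' ≠ 0 := fun h => hq₀ (measure_mono_null hqq' h)
    have step : ‖(⨍ x in q, f x) - ⨍ x in q', f x‖ ≤ 2 * C :=
      (norm_setAverage_sub_setAverage_le_mul_meanOscillation hqq' hq₀ hq'.volume_ne_top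
        (hvol.trans_le (min_le_left _ _)) (hf.mono_set hq'Q)).trans <| by
          gcongr
          exact hosc q' hq' hq'Q hq'₀.bot_lt
    have hk' : volume.real Q ≤ 2 ^ k * volume.real q' := by
      rw [hvol, mul_min_of_nonneg _ _ (by positivity)]
      refine le_min (by rwa [← mul_assoc, ← pow_succ]) ?_
      exact le_mul_of_one_le_left measureReal_nonneg (one_le_pow₀ one_le_two)
    calc ‖(⨍ x in q, f x) - ⨍ x in Q, f x‖
        ≤ ‖(⨍ x in q, f x) - ⨍ x in q', f x‖ + ‖(⨍ x in q', f x) - ⨍ x in Q, f x‖ :=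
          norm_sub_le_norm_sub_add_norm_sub _ _ _
      _ ≤ 2 * C + 2 * k * C := add_le_add step (ih hq' hq'Q hq'₀ hk')
      _ = 2 * (k + 1 : ℕ) * C := by push_cast; ring

theorem stmt5_general (hQ : IsRect Q) (hf : IntegrableOn f Q)
    (hosc : ∀ q', IsRect q' → q' ⊆ Q → 0 < volume q' → meanOscillation volume f q' ≤ C)
    {η : ℝ} (hη : 0 < η) (hq : IsRect q) (hqQ : q ⊆ Q) (hq₀ : volume q ≠ 0)
    (hηq : ENNReal.ofReal η * volume Q ≤ volume q) :
    ‖(⨍ x in q, f x) - ⨍ x in Q, f x‖ ≤ 2 * (⌈Real.logb 2 (1 / η)⌉ : ℝ) * C := by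
  have hηq_real : η * volume.real Q ≤ volume.real q := by
    simpa [Measure.real, hη.le] using ENNReal.toReal_mono hq.volume_ne_top hηq
  have hq_pos : 0 < volume.real q := ENNReal.toReal_pos hq₀ hq.volume_ne_top
  have hq_le_Q : volume.real q ≤ volume.real Q := measureReal_mono hqQ hQ.volume_ne_top
  have hη_le_one : η ≤ 1 := by
    by_contra! h
    nlinarith
  have hlog : 0 ≤ Real.logb 2 (1 / η) :=
    Real.logb_nonneg one_lt_two ((one_le_div hη).2 hη_le_one)
  rw [← natCast_ceil_eq_intCast_ceil hlog]
  refine hQ.norm_setAverage_sub_setAverage_le_of_volume_le_two_pow_mul hf hosc _ hq hqQ hq₀ ?_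
  calc volume.real Q = 1 / η * (η * volume.real Q) := by field_simp
    _ ≤ 2 ^ ⌈Real.logb 2 (1 / η)⌉₊ * volume.real q := by
      gcongr
      exact le_pow_natCeil_logb one_lt_two (one_div_pos.2 hη)

end Rect

/-- If `f` is locally integrable with BMO-type oscillation bound `C` over
axis-parallel rectangles contained in `[0,1)^d`, `η ∈ (0,1]`, and `q ⊆ [0,1)^d` is an
axis-parallel rectangle with `μ(q) ≥ η`, then
`|⟨f⟩_q − ⟨f⟩_{[0,1)^d}| ≤ 2 ⌈log₂(1/η)⌉ C`. -/
theorem stmt5 (d : ℕ) (f : (Fin d → ℝ) → ℝ) (hf : LocallyIntegrable f volume)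
    (C : ℝ) (hC : 0 ≤ C)
    (hBMO : ∀ q' : Set (Fin d → ℝ), IsRect q' → q' ⊆ unitCube d → 0 < volume q' →
      ⨍ x in q', |f x - ⨍ y in q', f y| ≤ C)
    (η : ℝ) (hη0 : 0 < η) (hη1 : η ≤ 1)
    (q : Set (Fin d → ℝ)) (hq : IsRect q) (hqsub : q ⊆ unitCube d)
    (hqvol : ENNReal.ofReal η ≤ volume q) :
    |(⨍ x in q, f x) - ⨍ x in unitCube d, f x| ≤ 2 * (⌈Real.logb 2 (1 / η)⌉ : ℝ) * C := by
  obtain ⟨K, hK, hcubeK⟩ := (isRect_unitCube d).subset_isCompact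
  exact stmt5_general (isRect_unitCube d) ((hf.integrableOn_isCompact hK).mono_set hcubeK) hBMO
    hη0 hq hqsub ((ENNReal.ofReal_pos.2 hη0).trans_le hqvol).ne'
    (by rwa [volume_unitCube, mul_one])
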